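/- Let f : ℝ → ℝ be a Schwartz function. Then lim_{ℓ → 0⁺} ℓ^{−3} ∫_{ℝ} ∫_{ℝ} (f(x + y) − f(x))² / (cosh(y/ℓ) + 1) dx dy = (2π²/3) ∫_{ℝ} f′(x)² dx. -/

import Mathlib

open Real MeasureTheory Filter

/-- The alternating variant of the Basel series. -/
lemma hasSum_neg_one_pow_div_sq :
    HasSum (fun n : ℕ => (-1 : ℝ) ^ n / (n : ℝ) ^ 2) (-(π ^ 2 / 12)) := by
  have hinj : Function.Injective (fun n : ℕ => 2 * n) := fun a b h => by
    simpa using h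
  have heven : HasSum (fun n : ℕ => ((-1 : ℝ) ^ n + 1) / (n : ℝ) ^ 2) (π ^ 2 / 12) := by
    rw [← hinj.hasSum_iff]
    · convert hasSum_zeta_two.mul_left (1 / 2) using 1
      · rfl
      · funext n
        rcases eq_or_ne n 0 with rfl | hn
        · simp
        · have : (n : ℝ) ≠ 0 := by exact_mod_cast hn
          simp only [Function.comp, pow_mul]
          push_cast
          field_simp
          norm_num
      · ring
    · intro n hn
      have hodd : Odd n := by
        rw [← Nat.not_even_iff_odd]
        rintro ⟨k, hk⟩
        exact hn ⟨k, by simp only; omega⟩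
      simp [hodd.neg_one_pow]
  convert heven.sub hasSum_zeta_two using 1
  · rfl
  · funext n
    ring
  · ring

/-- The expansion of `1 / (cosh t + 1)` in powers of `exp (-t)`. -/
lemma hasSum_inv_cosh_add_one {t : ℝ} (ht : 0 < t) :
    HasSum (fun n : ℕ => (-2 * n * (-1) ^ n) * rexp (-n * t)) (1 / (cosh t + 1)) := by
  have hr : ‖-rexp (-t)‖ < 1 := by
    rw [norm_neg, Real.norm_eq_abs, abs_of_pos (exp_pos _)]
    exact Real.exp_lt_one_iff.2 (by linarith)
  convert (hasSum_coe_mul_geometric_of_norm_lt_one hr).mul_left (-2) using 1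
  · rfl
  · funext n
    rw [neg_pow (rexp (-t)), ← Real.exp_nat_mul]
    ring_nf
  · rw [cosh_eq, Real.exp_neg, sub_neg_eq_add]
    have := exp_pos t
    field_simp
    ring

lemma integral_sq_div_cosh_add_one_Ioi :
    ∫ t in Set.Ioi (0 : ℝ), t ^ 2 / (cosh t + 1) = π ^ 2 / 3 := by
  have hmellin := hasSum_mellin (ι := ℕ) (a := fun n => ((-2 * n * (-1) ^ n : ℝ) : ℂ))
    (p := fun n => (n : ℝ)) (F := fun t => ((1 / (cosh t + 1) : ℝ) : ℂ)) (s := 3)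
    (fun n => by
      rcases eq_or_ne n 0 with rfl | hn
      · simp
      · right; positivity)
    (by norm_num)
    (fun t ht => by
      have := Complex.hasSum_ofReal.mpr (hasSum_inv_cosh_add_one ht)
      convert this using 2
      push_cast
      rfl)
    (by
      refine (hasSum_zeta_two.summable.mul_left 2).congr fun n => ?_
      rcases eq_or_ne n 0 with rfl | hn
      · simp
      · have : (n : ℝ) ≠ 0 := by exact_mod_cast hn
        have h3 : (n : ℝ) ^ (3 : ℂ).re = (n : ℝ) ^ 3 := by
          simp
        rw [h3]
        simp
        field_simp)
  have hsum : HasSum (fun n : ℕ => Complex.Gamma 3 * ((-2 * n * (-1) ^ n : ℝ) : ℂ) /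
      ((n : ℝ) : ℂ) ^ (3 : ℂ)) ((π ^ 2 / 3 : ℝ) : ℂ) := by
    have := Complex.hasSum_ofReal.mpr (hasSum_neg_one_pow_div_sq.mul_left (-4))
    convert this using 1
    · funext n
      have hG : Complex.Gamma 3 = 2 := by
        simp
      have h3 : ((n : ℝ) : ℂ) ^ (3 : ℂ) = (n : ℂ) ^ 3 := by
        simp
      rw [hG, h3]
      rcases eq_or_ne n 0 with rfl | hn
      · simp
      · have : (n : ℂ) ≠ 0 := by exact_mod_cast hn
        push_cast
        field_simp
        ring
    · congr 1
      ring
  have heq := hmellin.unique hsum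
  rw [← Complex.ofReal_inj, ← heq, mellin, ← integral_complex_ofReal]
  refine setIntegral_congr_fun measurableSet_Ioi fun t ht => ?_
  have h2 : (t : ℂ) ^ ((3 : ℂ) - 1) = (t : ℂ) ^ 2 := by
    rw [show (3 : ℂ) - 1 = ((2 : ℕ) : ℂ) by norm_num, Complex.cpow_natCast]
  simp only [h2, smul_eq_mul]
  push_cast
  ring

lemma integral_sq_div_cosh_add_one :
    ∫ t : ℝ, t ^ 2 / (cosh t + 1) = 2 * π ^ 2 / 3 := by
  have h := integral_comp_abs (f := fun t : ℝ => t ^ 2 / (cosh t + 1))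
  simp only [sq_abs, cosh_abs] at h
  rw [h, integral_sq_div_cosh_add_one_Ioi]
  ring

lemma integrable_sq_div_cosh_add_one :
    Integrable (fun t : ℝ => t ^ 2 / (cosh t + 1)) := by
  refine not_imp_comm.1 integral_undef ?_
  rw [integral_sq_div_cosh_add_one]
  positivity

namespace SchwartzMap

lemma integrable_sq (f : SchwartzMap ℝ ℝ) : Integrable (fun x => f x ^ 2) :=
  (f.memLp 2).integrable_sq

lemma exists_norm_deriv_le (f : SchwartzMap ℝ ℝ) :
    ∃ C, 0 ≤ C ∧ ∀ x, ‖deriv f x‖ ≤ C * (1 + x ^ 2)⁻¹ := by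
  obtain ⟨A, hA⟩ := (derivCLM ℝ ℝ f).decay 0 0
  obtain ⟨B, hB⟩ := (derivCLM ℝ ℝ f).decay 2 0
  have key : ∀ x, ‖deriv f x‖ ≤ (A + B) * (1 + x ^ 2)⁻¹ := fun x => by
    have h0 := hA.2 x
    have h2 := hB.2 x
    simp only [norm_iteratedFDeriv_zero, derivCLM_apply, pow_zero, one_mul, Real.norm_eq_abs,
      sq_abs] at h0 h2
    rw [← div_eq_mul_inv, le_div_iff₀ (by positivity), Real.norm_eq_abs]
    linarith
  exact ⟨A + B, by linarith [hA.1, hB.1], key⟩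

lemma exists_abs_sub_le (f : SchwartzMap ℝ ℝ) :
    ∃ C, 0 ≤ C ∧ ∀ x h, |h| ≤ 1 → |f (x + h) - f x| ≤ C * (1 + x ^ 2)⁻¹ * |h| := by
  obtain ⟨C, hC, hb⟩ := f.exists_norm_deriv_le
  refine ⟨3 * C, by positivity, fun x h hh => ?_⟩
  have hbound : ∀ z ∈ Metric.closedBall x 1, ‖deriv f z‖ ≤ 3 * C * (1 + x ^ 2)⁻¹ := by
    intro z hz
    have hz' : |z - x| ≤ 1 := by simpa [Real.dist_eq] using hz
    have hz2 : (z - x) ^ 2 ≤ 1 := (sq_le_one_iff_abs_le_one _).2 hz'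
    refine (hb z).trans ?_
    rw [mul_comm 3 C, mul_assoc]
    refine mul_le_mul_of_nonneg_left ?_ hC
    rw [← div_eq_mul_inv, inv_eq_one_div, div_le_div_iff₀ (by positivity) (by positivity)]
    nlinarith [sq_nonneg (2 * z - x)]
  have := (convex_closedBall x 1).norm_image_sub_le_of_norm_deriv_le
    (fun z _ => f.differentiableAt) hbound (Metric.mem_closedBall_self zero_le_one)
    (show x + h ∈ Metric.closedBall x 1 by simpa [Real.dist_eq] using hh)
  simpa using this

lemma exists_integral_sub_sq_le (f : SchwartzMap ℝ ℝ) :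
    ∃ C, ∀ h, ∫ x, (f (x + h) - f x) ^ 2 ≤ C * h ^ 2 := by
  obtain ⟨C, hC, hb⟩ := f.exists_abs_sub_le
  have hint : Integrable fun x : ℝ => C ^ 2 * (1 + x ^ 2)⁻¹ := integrable_inv_one_add_sq.const_mul _
  refine ⟨(∫ x : ℝ, C ^ 2 * (1 + x ^ 2)⁻¹) + 4 * ∫ x, f x ^ 2, fun h => ?_⟩
  have hI : 0 ≤ ∫ x : ℝ, C ^ 2 * (1 + x ^ 2)⁻¹ := integral_nonneg fun x => by positivity
  have hJ : 0 ≤ ∫ x, f x ^ 2 := integral_nonneg fun x => sq_nonneg _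
  rcases le_total |h| 1 with hh | hh
  · calc ∫ x, (f (x + h) - f x) ^ 2 ≤ ∫ x : ℝ, C ^ 2 * (1 + x ^ 2)⁻¹ * h ^ 2 := by
          refine integral_mono_of_nonneg (ae_of_all _ fun x => sq_nonneg _) (hint.mul_const _)
            (ae_of_all _ fun x => ?_)
          have h1 : (1 + x ^ 2)⁻¹ ≤ 1 := inv_le_one_of_one_le₀ (by nlinarith [sq_nonneg x])
          have h0 : 0 ≤ (1 + x ^ 2)⁻¹ := by positivity
          calc (f (x + h) - f x) ^ 2 = |f (x + h) - f x| ^ 2 := (sq_abs _).symm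
            _ ≤ (C * (1 + x ^ 2)⁻¹ * |h|) ^ 2 := by gcongr; exact hb x h hh
            _ = C ^ 2 * ((1 + x ^ 2)⁻¹ * (1 + x ^ 2)⁻¹) * h ^ 2 := by
              rw [mul_pow, sq_abs]; ring
            _ ≤ C ^ 2 * (1 + x ^ 2)⁻¹ * h ^ 2 := by
              gcongr; exact mul_le_of_le_one_left h0 h1
      _ = (∫ x : ℝ, C ^ 2 * (1 + x ^ 2)⁻¹) * h ^ 2 := integral_mul_const _ _
      _ ≤ _ := by gcongr; linarith
  · have h2 : 1 ≤ h ^ 2 := (one_le_sq_iff_one_le_abs _).2 hh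
    have hs : Integrable (fun x => f (x + h) ^ 2) := f.integrable_sq.comp_add_right h
    calc ∫ x, (f (x + h) - f x) ^ 2 ≤ ∫ x, (2 * f (x + h) ^ 2 + 2 * f x ^ 2) := by
          refine integral_mono_of_nonneg (ae_of_all _ fun x => sq_nonneg _)
            ((hs.const_mul 2).add (f.integrable_sq.const_mul 2)) (ae_of_all _ fun x => ?_)
          simp only
          nlinarith [sq_nonneg (f (x + h) + f x)]
      _ = 4 * ∫ x, f x ^ 2 := by
          rw [integral_add (hs.const_mul 2) (f.integrable_sq.const_mul 2), integral_const_mul,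
            integral_const_mul, integral_add_right_eq_self (fun x => f x ^ 2)]
          ring
      _ ≤ (∫ x : ℝ, C ^ 2 * (1 + x ^ 2)⁻¹) + 4 * ∫ x, f x ^ 2 := by linarith
      _ ≤ _ := le_mul_of_one_le_right (by positivity) h2

lemma tendsto_integral_sub_sq_div_sq (f : SchwartzMap ℝ ℝ) :
    Tendsto (fun h : ℝ => ∫ x, ((f (x + h) - f x) / h) ^ 2) (nhdsWithin 0 {0}ᶜ)
      (nhds (∫ x, deriv f x ^ 2)) := by
  obtain ⟨C, hC, hb⟩ := f.exists_abs_sub_le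
  refine tendsto_integral_filter_of_dominated_convergence
    (fun x : ℝ => C ^ 2 * (1 + x ^ 2)⁻¹) ?_ ?_ (integrable_inv_one_add_sq.const_mul _) ?_
  · refine Eventually.of_forall fun h => Continuous.aestronglyMeasurable ?_
    have := f.continuous
    fun_prop
  · have hsmall : ∀ᶠ h : ℝ in nhdsWithin 0 {0}ᶜ, |h| ≤ 1 := by
      refine nhdsWithin_le_nhds ?_
      filter_upwards [Metric.closedBall_mem_nhds (0 : ℝ) one_pos] with h hh
      simpa using hh
    filter_upwards [hsmall, self_mem_nhdsWithin] with h hh hne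
    refine ae_of_all _ fun x => ?_
    have hpos : 0 < |h| := abs_pos.2 hne
    have h1 : (1 + x ^ 2)⁻¹ ≤ 1 := inv_le_one_of_one_le₀ (by nlinarith [sq_nonneg x])
    have h0 : 0 ≤ (1 + x ^ 2)⁻¹ := by positivity
    rw [norm_pow, norm_div, Real.norm_eq_abs, Real.norm_eq_abs]
    calc (|f (x + h) - f x| / |h|) ^ 2 ≤ (C * (1 + x ^ 2)⁻¹) ^ 2 := by
          gcongr
          rw [div_le_iff₀ hpos]
          exact hb x h hh
      _ = C ^ 2 * ((1 + x ^ 2)⁻¹ * (1 + x ^ 2)⁻¹) := by ring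
      _ ≤ C ^ 2 * (1 + x ^ 2)⁻¹ := by gcongr; exact mul_le_of_le_one_left h0 h1
  · refine ae_of_all _ fun x => Tendsto.pow ?_ 2
    have := f.differentiableAt.hasDerivAt (x := x)
    refine (hasDerivAt_iff_tendsto_slope_zero.1 this).congr fun h => ?_
    rw [smul_eq_mul, div_eq_inv_mul]

end SchwartzMap

theorem strip_jump_form_cosh_add_one_limit (f : SchwartzMap ℝ ℝ) :
    Filter.Tendsto
      (fun ℓ : ℝ =>
        ℓ ^ (-3 : ℤ) * ∫ y : ℝ, ∫ x : ℝ, (f (x + y) - f x) ^ 2 / (Real.cosh (y / ℓ) + 1))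
      (nhdsWithin 0 (Set.Ioi 0))
      (nhds ((2 * π ^ 2 / 3) * ∫ x : ℝ, (deriv (⇑f) x) ^ 2)) := by
  obtain ⟨C, hC⟩ := f.exists_integral_sub_sq_le
  have hrescale : ∀ ℓ ∈ Set.Ioi (0 : ℝ),
      (∫ t : ℝ, (∫ x, (f (x + ℓ * t) - f x) ^ 2) / ℓ ^ 2 / (cosh t + 1)) =
        ℓ ^ (-3 : ℤ) * ∫ y : ℝ, ∫ x : ℝ, (f (x + y) - f x) ^ 2 / (cosh (y / ℓ) + 1) := by
    intro ℓ hℓ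
    have hℓ : 0 < ℓ := hℓ
    have := Measure.integral_comp_mul_left
      (fun y : ℝ => (∫ x, (f (x + y) - f x) ^ 2) / ℓ ^ 2 / (cosh (y / ℓ) + 1)) ℓ
    simp only [mul_div_cancel_left₀ _ hℓ.ne'] at this
    rw [this, abs_of_pos (inv_pos.2 hℓ), smul_eq_mul, ← integral_const_mul, ← integral_const_mul]
    congr 1
    funext y
    rw [integral_div, zpow_neg, show (3 : ℤ) = ((3 : ℕ) : ℤ) by rfl, zpow_natCast]
    field_simp
  rw [← integral_sq_div_cosh_add_one, ← integral_mul_const]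
  refine Tendsto.congr' (eventually_nhdsWithin_of_forall hrescale) ?_
  refine tendsto_integral_filter_of_dominated_convergence
    (fun t => C * (t ^ 2 / (cosh t + 1))) ?_ ?_ (integrable_sq_div_cosh_add_one.const_mul C) ?_
  · refine Eventually.of_forall fun ℓ => ?_
    have hG : StronglyMeasurable fun t : ℝ => ∫ x, (f (x + ℓ * t) - f x) ^ 2 := by
      refine StronglyMeasurable.integral_prod_right
        (f := fun t x : ℝ => (f (x + ℓ * t) - f x) ^ 2) (Continuous.stronglyMeasurable ?_)
      have := f.continuous
      simp only [Function.uncurry_def]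
      fun_prop
    have hc : Measurable fun t : ℝ => cosh t + 1 := by fun_prop
    exact ((hG.measurable.div_const _).div hc).aestronglyMeasurable
  · filter_upwards [self_mem_nhdsWithin] with ℓ (hℓ : 0 < ℓ)
    refine ae_of_all _ fun t => ?_
    have hcosh := cosh_pos t
    have hnonneg : 0 ≤ ∫ x, (f (x + ℓ * t) - f x) ^ 2 := integral_nonneg fun x => sq_nonneg _
    rw [Real.norm_of_nonneg (by positivity), ← mul_div_assoc]
    gcongr
    rw [div_le_iff₀ (by positivity)]
    exact (hC _).trans_eq (by ring)
  · refine ae_of_all _ fun t => ?_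
    rw [div_mul_eq_mul_div]
    refine Tendsto.div_const ?_ _
    rcases eq_or_ne t 0 with rfl | ht
    · simp
    have hlim : Tendsto (fun ℓ : ℝ => ℓ * t) (nhdsWithin 0 (Set.Ioi 0)) (nhdsWithin 0 {0}ᶜ) := by
      refine tendsto_nhdsWithin_iff.2 ⟨?_, ?_⟩
      · have : Tendsto (fun ℓ : ℝ => ℓ * t) (nhds 0) (nhds (0 * t)) :=
          tendsto_id.mul_const t
        rw [zero_mul] at this
        exact this.mono_left nhdsWithin_le_nhds
      · filter_upwards [self_mem_nhdsWithin] with ℓ (hℓ : 0 < ℓ)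
        exact mul_ne_zero hℓ.ne' ht
    refine ((f.tendsto_integral_sub_sq_div_sq.comp hlim).const_mul (t ^ 2)).congr' ?_
    filter_upwards [self_mem_nhdsWithin] with ℓ (hℓ : 0 < ℓ)
    simp only [Function.comp, div_pow]
    rw [integral_div]
    field_simp
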